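/- Let H be a real Hilbert space, let 0 < c₁ < ∞, let s ∈ {−1,1} and let J be a unitary operator on H. Then for every ε ∈ (0, c₁) and all vectors w₁, w₂ ∈ M(H) with w₁ ≠ w₂, there exist λ ∈ (0,ε), a unit vector n ∈ H and a ∈ M(H) such that W_{λ,c₁}[s,n,J;a] w₁ = W_{λ,∞}[s,n,J;a] w₂. -/

import Mathlib

open scoped InnerProductSpace

/-- Generalized Lorentz transform `W_{λ,c}[s,n,J]` on `M(H) = ℝ × H` (case `λ < ∞`, `c < ∞`). -/
noncomputable def Wfin {H : Type*} [NormedAddCommGroup H] [InnerProductSpace ℝ H]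
    (lam c s : ℝ) (n : H) (J : H ≃ₗᵢ[ℝ] H) (w : ℝ × H) : ℝ × H :=
  ((s * w.1 - lam / c ^ 2 * ⟪n, w.2⟫_ℝ) / Real.sqrt |1 - lam ^ 2 / c ^ 2|,
    J (((lam * w.1 - s * ⟪n, w.2⟫_ℝ) / Real.sqrt |1 - lam ^ 2 / c ^ 2|) • n
      + (w.2 - ⟪n, w.2⟫_ℝ • n)))

/-- Generalized Lorentz transform `W_{λ,∞}[s,n,J]` on `M(H) = ℝ × H` (case `c = ∞`). -/
noncomputable def Wgal {H : Type*} [NormedAddCommGroup H] [InnerProductSpace ℝ H]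
    (lam s : ℝ) (n : H) (J : H ≃ₗᵢ[ℝ] H) (w : ℝ × H) : ℝ × H :=
  (s * w.1, J ((lam * w.1 - s * ⟪n, w.2⟫_ℝ) • n + (w.2 - ⟪n, w.2⟫_ℝ • n)))

/-- Generalized Lorentz transform `W_{∞,c}[s,n,J]` on `M(H) = ℝ × H` (case `λ = ∞`). -/
noncomputable def Wtach {H : Type*} [NormedAddCommGroup H] [InnerProductSpace ℝ H]
    (c s : ℝ) (n : H) (J : H ≃ₗᵢ[ℝ] H) (w : ℝ × H) : ℝ × H :=
  (-⟪n, w.2⟫_ℝ / c, J ((c * w.1) • n + (w.2 - ⟪n, w.2⟫_ℝ • n)))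

/-!
For `n` along the spatial part of `w₁ - w₂` (any `n` if that part is zero), the points `w₁` and `w₂`
differ only in the plane spanned by `e₀` and `n`. Both transforms are linear and reduce to `J` on
the orthogonal complement of that plane, so the merging equation
`(W_{λ,c} - W_{λ,∞}) a = W_{λ,∞} w₂ - W_{λ,c} w₁` becomes a `2 × 2` linear system for
`a = (T, ξ n)`. With `g = √|1 - λ²/c²|` and both equations multiplied by `g`, its determinant is
`(1 - g) (λ²/c² - (1 - g))`. It vanishes only for `g ∈ {0, 1}`, that is, for `λ² ∈ {0, c², 2c²}`, so
the points merge for every other speed, in particular for all `0 < λ < c`.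
-/

theorem exists_mul_add_mul_eq_of_det_ne_zero {K : Type*} [Field K] {a b c d : K}
    (h : a * d - b * c ≠ 0) (p q : K) : ∃ x y : K, a * x + b * y = p ∧ c * x + d * y = q := by
  refine ⟨(p * d - b * q) / (a * d - b * c), (a * q - p * c) / (a * d - b * c), ?_, ?_⟩ <;>
  · rw [← mul_div_assoc, ← mul_div_assoc, ← add_div, div_eq_iff h]
    ring

theorem exists_norm_eq_one_and_norm_smul_eq {E : Type*} [NormedAddCommGroup E] [NormedSpace ℝ E]
    [Nontrivial E] (x : E) : ∃ n : E, ‖n‖ = 1 ∧ ‖x‖ • n = x := by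
  rcases eq_or_ne x 0 with rfl | hx
  · obtain ⟨n, hn⟩ := exists_norm_eq E zero_le_one
    exact ⟨n, hn, by rw [norm_zero, zero_smul]⟩
  · exact ⟨NormedSpace.normalize x, NormedSpace.norm_normalize_eq_one_iff.mpr hx,
      NormedSpace.norm_smul_normalize x⟩

/-- The Lorentz contraction factor `√|1 - λ²/c²|` dividing the components of `W_{λ,c}`; the absolute
value makes it meaningful for superluminal `λ` as well. -/
noncomputable def lorentzContraction (lam c : ℝ) : ℝ :=
  Real.sqrt |1 - lam ^ 2 / c ^ 2|

section LorentzContraction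

variable {lam c : ℝ}

theorem lorentzContraction_nonneg : 0 ≤ lorentzContraction lam c :=
  Real.sqrt_nonneg _

theorem lorentzContraction_sq : lorentzContraction lam c ^ 2 = |1 - lam ^ 2 / c ^ 2| :=
  Real.sq_sqrt (abs_nonneg _)

theorem lorentzContraction_ne_zero (hc : c ≠ 0) (h : lam ^ 2 ≠ c ^ 2) :
    lorentzContraction lam c ≠ 0 := by
  rw [← pow_ne_zero_iff two_ne_zero, lorentzContraction_sq, abs_ne_zero, sub_ne_zero, ne_comm]
  exact mt (div_eq_one_iff_eq (pow_ne_zero 2 hc)).mp h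

theorem lorentzContraction_ne_one (hc : c ≠ 0) (hlam : lam ≠ 0) (h : lam ^ 2 ≠ 2 * c ^ 2) :
    lorentzContraction lam c ≠ 1 := by
  intro hg
  have habs : |1 - lam ^ 2 / c ^ 2| = 1 := by rw [← lorentzContraction_sq, hg, one_pow]
  rcases eq_or_eq_neg_of_abs_eq habs with hsub | hsuper
  · have hzero : lam ^ 2 / c ^ 2 = 0 := by linarith
    exact div_ne_zero (pow_ne_zero 2 hlam) (pow_ne_zero 2 hc) hzero
  · have htwo : lam ^ 2 / c ^ 2 = 2 := by linarith
    exact h ((div_eq_iff (pow_ne_zero 2 hc)).mp htwo)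

theorem sq_div_sq_ne_one_sub_lorentzContraction (h₀ : lorentzContraction lam c ≠ 0)
    (h₁ : lorentzContraction lam c ≠ 1) :
    lam ^ 2 / c ^ 2 ≠ 1 - lorentzContraction lam c := by
  intro h
  have hsq : lorentzContraction lam c ^ 2 = lorentzContraction lam c := by
    rw [lorentzContraction_sq, h, sub_sub_cancel, abs_of_nonneg lorentzContraction_nonneg]
  exact h₁ (mul_left_cancel₀ h₀ (by rw [← sq, hsq, mul_one]))

end LorentzContraction

section Merging

variable {H : Type*} [NormedAddCommGroup H] [InnerProductSpace ℝ H]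

/-- The component `X₁⊥[n]` of `x` orthogonal to the unit vector `n`, on which both kinds of
transform act through `J` alone. It is restricted to spatial vectors, as `X₁⊥[n]` ignores time. -/
def transverseComponent (n x : H) : H :=
  x - ⟪n, x⟫_ℝ • n

theorem transverseComponent_add_smul {n : H} (hn : ‖n‖ = 1) (x : H) (r : ℝ) :
    transverseComponent n (x + r • n) = transverseComponent n x := by
  simp only [transverseComponent, inner_add_right, real_inner_smul_right,
    inner_self_eq_one_of_norm_eq_one hn]
  module

theorem exists_norm_eq_one_and_transverseComponent_eq [Nontrivial H] (x y : H) :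
    ∃ n : H, ‖n‖ = 1 ∧ transverseComponent n x = transverseComponent n y := by
  obtain ⟨n, hn, hxy⟩ := exists_norm_eq_one_and_norm_smul_eq (x - y)
  refine ⟨n, hn, ?_⟩
  rw [← transverseComponent_add_smul hn y ‖x - y‖, hxy, add_sub_cancel]

theorem Wfin_eq_Wgal_of_components {lam c s : ℝ} {n : H} (J : H ≃ₗᵢ[ℝ] H) {v w : ℝ × H}
    (hg : lorentzContraction lam c ≠ 0)
    (htime : s * v.1 - lam / c ^ 2 * ⟪n, v.2⟫_ℝ = lorentzContraction lam c * (s * w.1))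
    (hlong : lam * v.1 - s * ⟪n, v.2⟫_ℝ =
      lorentzContraction lam c * (lam * w.1 - s * ⟪n, w.2⟫_ℝ))
    (htrans : transverseComponent n v.2 = transverseComponent n w.2) :
    Wfin lam c s n J v = Wgal lam s n J w := by
  simp only [transverseComponent, lorentzContraction] at hg htime hlong htrans
  simp only [Wfin, Wgal, htime, hlong, htrans, mul_div_cancel_left₀ _ hg]

theorem exists_Wfin_add_eq_Wgal_add {lam c s : ℝ} (hs : s ^ 2 = 1)
    (hg₀ : lorentzContraction lam c ≠ 0) (hg₁ : lorentzContraction lam c ≠ 1)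
    {n : H} (hn : ‖n‖ = 1) (J : H ≃ₗᵢ[ℝ] H) {w₁ w₂ : ℝ × H}
    (hw : transverseComponent n w₁.2 = transverseComponent n w₂.2) :
    ∃ a : ℝ × H, Wfin lam c s n J (w₁ + a) = Wgal lam s n J (w₂ + a) := by
  set g := lorentzContraction lam c with hg
  have hdet : s * (1 - g) * -(s * (1 - g)) - -(lam / c ^ 2) * (lam * (1 - g)) ≠ 0 := by
    have hfactor : s * (1 - g) * -(s * (1 - g)) - -(lam / c ^ 2) * (lam * (1 - g)) =
        (1 - g) * (lam ^ 2 / c ^ 2 - (1 - g)) := by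
      linear_combination -(1 - g) ^ 2 * hs
    rw [hfactor]
    exact mul_ne_zero (sub_ne_zero.mpr hg₁.symm)
      (sub_ne_zero.mpr (sq_div_sq_ne_one_sub_lorentzContraction hg₀ hg₁))
  obtain ⟨T, ξ, htime, hlong⟩ := exists_mul_add_mul_eq_of_det_ne_zero hdet
    (g * (s * w₂.1) - (s * w₁.1 - lam / c ^ 2 * ⟪n, w₁.2⟫_ℝ))
    (g * (lam * w₂.1 - s * ⟪n, w₂.2⟫_ℝ) - (lam * w₁.1 - s * ⟪n, w₁.2⟫_ℝ))
  have hinner (x : H) : ⟪n, x + ξ • n⟫_ℝ = ⟪n, x⟫_ℝ + ξ := by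
    rw [inner_add_right, real_inner_smul_right, inner_self_eq_one_of_norm_eq_one hn, mul_one]
  refine ⟨(T, ξ • n), Wfin_eq_Wgal_of_components J hg₀ ?_ ?_ ?_⟩
  · simp only [Prod.fst_add, Prod.snd_add, hinner, ← hg]
    linear_combination htime
  · simp only [Prod.fst_add, Prod.snd_add, hinner, ← hg]
    linear_combination hlong
  · simp only [Prod.snd_add, transverseComponent_add_smul hn, hw]

theorem stmt6_general [Nontrivial H] {c₁ : ℝ} (hc₁ : c₁ ≠ 0) {s : ℝ} (hs : s = 1 ∨ s = -1)
    (J : H ≃ₗᵢ[ℝ] H) {lam : ℝ} (hlam : lam ≠ 0) (hlam₁ : lam ^ 2 ≠ c₁ ^ 2)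
    (hlam₂ : lam ^ 2 ≠ 2 * c₁ ^ 2) (w₁ w₂ : ℝ × H) :
    ∃ n : H, ‖n‖ = 1 ∧ ∃ a : ℝ × H,
      Wfin lam c₁ s n J (w₁ + a) = Wgal lam s n J (w₂ + a) := by
  obtain ⟨n, hn, hw⟩ := exists_norm_eq_one_and_transverseComponent_eq w₁.2 w₂.2
  exact ⟨n, hn, exists_Wfin_add_eq_Wgal_add (sq_eq_one_iff.mpr hs)
    (lorentzContraction_ne_zero hc₁ hlam₁) (lorentzContraction_ne_one hc₁ hlam hlam₂) hn J hw⟩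

end Merging

/-- Lemma on merging of distinct points, `c₂ = ∞`: for every `ε ∈ (0,c₁)`
and all `w₁ ≠ w₂` in `M(H)` there exist `λ ∈ (0,ε)`, a unit vector `n` and `a ∈ M(H)`
with `W_{λ,c₁}[s,n,J;a] w₁ = W_{λ,∞}[s,n,J;a] w₂`. -/
theorem stmt6 {H : Type*} [NormedAddCommGroup H] [InnerProductSpace ℝ H] [CompleteSpace H]
    [Nontrivial H]
    (c₁ : ℝ) (hc₁ : 0 < c₁)
    (s : ℝ) (hs : s = 1 ∨ s = -1) (J : H ≃ₗᵢ[ℝ] H)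
    (ε : ℝ) (hε : 0 < ε) (hε' : ε < c₁)
    (w₁ w₂ : ℝ × H) (hw : w₁ ≠ w₂) :
    ∃ lam : ℝ, 0 < lam ∧ lam < ε ∧ ∃ n : H, ‖n‖ = 1 ∧ ∃ a : ℝ × H,
      Wfin lam c₁ s n J (w₁ + a) = Wgal lam s n J (w₂ + a) := by
  obtain ⟨n, hn, a, h⟩ := stmt6_general hc₁.ne' hs J (lam := ε / 2) (half_pos hε).ne'
    (by nlinarith) (by nlinarith) w₁ w₂
  exact ⟨ε / 2, half_pos hε, half_lt_self hε, n, hn, a, h⟩
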